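/- Let q be a real number with 0 < q and q ≠ 1, let h₁, l₁, l₂, α₁, λ be real numbers and t₁, t₂ nonzero reals. Assume λ + α₁ = -N for some positive integer N (so (q^{λ+α₁};q)_n = 0 for all n > N and the series below is a finite sum). Then the function g(x) = x^{-α₁} · Σ_{n=0}^{N} (q^{1/2}/x)^n · (q^{λ+α₁};q)_n · Σ_{k=0}^{n} [(q^{λ+α₁-h₁+l₁};q)_{n-k} / ((q;q)_k (q;q)_{n-k})] · (q^{l₁}t₁)^k · (q^{l₂}t₂)^{n-k} satisfies the variant of the confluent q-hypergeometric equation of type (2,1) for all x > 0. -/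

import Mathlib

/-- The finite q-shifted factorial `(a;q)_n = ∏_{i=0}^{n-1} (1 - a q^i)`. -/
noncomputable def qPoch (q a : ℝ) (n : ℕ) : ℝ :=
  ∏ i ∈ Finset.range n, (1 - a * q ^ i)

/-- The variant of the confluent q-hypergeometric equation of type (2,1) (for `x > 0`). -/
def confEq21 (q h₁ l₁ l₂ α₁ lam t₁ t₂ : ℝ) (g : ℝ → ℝ) : Prop :=
  ∀ x : ℝ, 0 < x →
    (x - q ^ (l₁ - 1/2) * t₁) * (x - q ^ (l₂ - 1/2) * t₂) * g (q * x)
    - q ^ (-h₁ + l₁ + l₂ + 2 * lam - 1/2) * t₂ * (x - q ^ (h₁ + 1/2) * t₁) * g (x / q)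
    - (q ^ (-α₁) * x ^ 2
        - q ^ (l₁ + l₂ + lam - 1/2) * (q ^ (-l₂) * t₁ + (q ^ (-h₁) + q ^ (-l₁)) * t₂) * x
        + q ^ (l₁ + l₂ + lam) * (1 + q⁻¹) * t₁ * t₂) * g x = 0

lemma qPoch_succ (q a : ℝ) (n : ℕ) : qPoch q a (n+1) = qPoch q a n * (1 - a * q ^ n) := by
  simp [qPoch, Finset.prod_range_succ]

lemma one_sub_ne {q : ℝ} (hq : 0 < q) (hq1 : q ≠ 1) (n : ℕ) : 1 - q * q ^ n ≠ 0 := by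
  intro h
  have h1 : q ^ (n+1) = 1 := by rw [pow_succ]; linarith
  exact hq1 ((pow_eq_one_iff_of_nonneg hq.le (by omega)).1 h1)

lemma qPoch_ne {q : ℝ} (hq : 0 < q) (hq1 : q ≠ 1) (n : ℕ) : qPoch q q n ≠ 0 := by
  unfold qPoch
  exact Finset.prod_ne_zero_iff.2 fun i _ => one_sub_ne hq hq1 i

/-- The inner convolution. -/
noncomputable def convC (q a b B : ℝ) (n : ℕ) : ℝ :=
  ∑ k ∈ Finset.range (n + 1),
    qPoch q B (n - k) / (qPoch q q k * qPoch q q (n - k)) * a ^ k * b ^ (n - k)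

lemma convC_rec {q : ℝ} (hq : 0 < q) (hq1 : q ≠ 1) (a b B : ℝ) :
    (1 - q) * convC q a b B 1 = (a + b - B * b) * convC q a b B 0 ∧
    ∀ n, (1 - q ^ (n+2)) * convC q a b B (n+2) =
      (a + b - B * b * q ^ (n+1)) * convC q a b B (n+1) - a * b * convC q a b B n := by
  let E : PowerSeries ℝ := PowerSeries.mk fun n => a ^ n / qPoch q q n
  let F : PowerSeries ℝ := PowerSeries.mk fun n => qPoch q B n * b ^ n / qPoch q q n
  let H := E * F
  have hH : ∀ n, PowerSeries.coeff n H = convC q a b B n := by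
    intro n
    simp only [H, PowerSeries.coeff_mul, E, F, PowerSeries.coeff_mk, convC]
    rw [Finset.Nat.sum_antidiagonal_eq_sum_range_succ
      (fun i j => a ^ i / qPoch q q i * (qPoch q B j * b ^ j / qPoch q q j))]
    refine Finset.sum_congr rfl fun k _ => ?_
    have := qPoch_ne hq hq1 k
    have := qPoch_ne hq hq1 (n-k)
    field_simp
  have hE : E - PowerSeries.C a * (PowerSeries.X * E) = PowerSeries.rescale q E := by
    ext n
    cases n with
    | zero => simp [E]
    | succ n =>
      simp only [map_sub, PowerSeries.coeff_C_mul, PowerSeries.coeff_succ_X_mul,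
        PowerSeries.coeff_rescale, E, PowerSeries.coeff_mk, qPoch_succ]
      have := qPoch_ne hq hq1 n
      have := one_sub_ne hq hq1 n
      field_simp
      ring
  have hF : F - PowerSeries.C b * (PowerSeries.X * F) = PowerSeries.rescale q F
      - PowerSeries.C (B * b) * (PowerSeries.X * PowerSeries.rescale q F) := by
    ext n
    cases n with
    | zero =>
      simp only [map_sub, PowerSeries.coeff_C_mul, PowerSeries.coeff_zero_X_mul,
        PowerSeries.coeff_rescale]
      simp
    | succ n =>
      simp only [map_sub, PowerSeries.coeff_C_mul, PowerSeries.coeff_succ_X_mul,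
        PowerSeries.coeff_rescale, F, PowerSeries.coeff_mk, qPoch_succ, pow_succ]
      have := qPoch_ne hq hq1 n
      have := one_sub_ne hq hq1 n
      rw [mul_comm q] at this
      simp only [mul_comm q (q ^ n)]
      generalize q ^ n = Q at *
      field_simp
      ring
  have key : H - PowerSeries.C (a + b) * (PowerSeries.X * H)
      + PowerSeries.C (a * b) * (PowerSeries.X * (PowerSeries.X * H))
      = PowerSeries.rescale q H
        - PowerSeries.C (B * b) * (PowerSeries.X * PowerSeries.rescale q H) := by
    have e : PowerSeries.rescale q H = PowerSeries.rescale q E * PowerSeries.rescale q F :=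
      map_mul _ _ _
    rw [e]
    have e2 : PowerSeries.rescale q E * PowerSeries.rescale q F - PowerSeries.C (B * b) *
        (PowerSeries.X * (PowerSeries.rescale q E * PowerSeries.rescale q F)) =
        PowerSeries.rescale q E * (PowerSeries.rescale q F
      - PowerSeries.C (B * b) * (PowerSeries.X * PowerSeries.rescale q F)) := by ring
    rw [e2, ← hF, ← hE]
    simp only [H, map_add, map_mul]
    ring
  constructor
  · have h1 := congrArg (PowerSeries.coeff 1) key
    have h0 : PowerSeries.coeff 1 (PowerSeries.X * (PowerSeries.X * H)) = 0 := by
      rw [PowerSeries.coeff_succ_X_mul 0]; simp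
    simp only [map_sub, map_add, PowerSeries.coeff_C_mul, h0, PowerSeries.coeff_rescale,
      hH, PowerSeries.coeff_succ_X_mul (n := 0)] at h1
    simp only [← map_add, PowerSeries.coeff_C_mul] at h1
    have h2 := PowerSeries.coeff_succ_X_mul 0 H
    simp only [zero_add, hH] at h2
    rw [h2] at h1
    linear_combination h1
  · intro n
    have h1 := congrArg (PowerSeries.coeff (n+2)) key
    simp only [LinearMap.map_add, LinearMap.map_sub, PowerSeries.coeff_C_mul,
      PowerSeries.coeff_succ_X_mul, PowerSeries.coeff_rescale, hH] at h1
    linear_combination h1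

lemma main_poly {q : ℝ} (hq : 0 < q) (hq1 : q ≠ 1) (a b A B y : ℝ) (N : ℕ)
    (hA : A * q ^ N = 1) (G : ℝ → ℝ)
    (hG : ∀ z, G z = ∑ n ∈ Finset.range (N+1), z ^ n * qPoch q A n * convC q a b B n) :
    (1 - a * y / q) * (1 - b * y / q) * G (y / q) - A * b * (y / q) * (B - A * a * y) * G (y * q)
    - (1 - y / q * (A * a + B * b + A * b) + A * a * b * (1 + 1 / q) * y ^ 2 / q) * G y = 0 := by
  obtain ⟨r1, r2⟩ := convC_rec hq hq1 a b B
  have hq0 := hq.ne'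
  have tel : ∀ M : ℕ, (∑ n ∈ Finset.range (M+1),
      ((1 - a * y / q) * (1 - b * y / q) * (y / q) ^ n
        - A * b * (y / q) * (B - A * a * y) * (y * q) ^ n
        - (1 - y / q * (A * a + B * b + A * b) + A * a * b * (1 + 1 / q) * y ^ 2 / q) * y ^ n)
        * (qPoch q A n * convC q a b B n)) =
      -(1 / q ^ (M+1) - 1) * (qPoch q A (M+1) * convC q a b B (M+1)) * y ^ (M+1)
      + a * b / q ^ (M+2) * (1 - A * q ^ (M+1)) * (1 - A * q ^ M)
        * (qPoch q A M * convC q a b B M) * y ^ (M+2) := by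
    intro M
    induction M with
    | zero =>
      have p0 : qPoch q A 0 = 1 := by simp [qPoch]
      simp only [zero_add, Finset.sum_range_one, qPoch_succ q A 0, p0]
      field_simp
      linear_combination (y * q * (1 - A)) * r1
    | succ M ih =>
      rw [Finset.sum_range_succ, ih]
      have h := r2 M
      simp only [qPoch_succ q A (M+1), qPoch_succ q A M, div_pow, mul_pow, pow_succ] at h ⊢
      have hp : q ^ M ≠ 0 := pow_ne_zero _ hq0
      generalize q ^ M = Q at *
      generalize y ^ M = Y at *
      generalize qPoch q A M = P at *
      generalize convC q a b B M = c0 at *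
      generalize convC q a b B (M+1) = c1 at *
      generalize convC q a b B (M+1+1) = c2 at *
      field_simp
      linear_combination (q * Y * y ^ 2 * P * (1 - A * Q) * (1 - A * Q * q)) * h
  have t := tel N
  rw [qPoch_succ q A N, hA] at t
  simp only [sub_self, mul_zero, zero_mul, add_zero] at t
  rw [hG, hG, hG, ← t, Finset.mul_sum, Finset.mul_sum, Finset.mul_sum, ← Finset.sum_sub_distrib,
    ← Finset.sum_sub_distrib]
  exact Finset.sum_congr rfl fun n _ => by ring

theorem stmt12 (q h₁ l₁ l₂ α₁ lam t₁ t₂ : ℝ) (N : ℕ)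
    (hq : 0 < q) (hq1 : q ≠ 1) (ht₁ : t₁ ≠ 0) (ht₂ : t₂ ≠ 0)
    (hN : 0 < N) (hNlam : lam + α₁ = -(N : ℝ)) :
    confEq21 q h₁ l₁ l₂ α₁ lam t₁ t₂ (fun x =>
      x ^ (-α₁) * ∑ n ∈ Finset.range (N + 1),
        (q ^ (1/2 : ℝ) / x) ^ n * qPoch q (q ^ (lam + α₁)) n *
          ∑ k ∈ Finset.range (n + 1),
            qPoch q (q ^ (lam + α₁ - h₁ + l₁)) (n - k) / (qPoch q q k * qPoch q q (n - k)) *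
              (q ^ l₁ * t₁) ^ k * (q ^ l₂ * t₂) ^ (n - k)) := by
  
  intro x hx
  have hq0 := hq.ne'
  have hx0 := hx.ne'
  set s := q ^ (1/2 : ℝ) with hs
  have hspos : 0 < s := Real.rpow_pos_of_pos hq _
  have hs0 := hspos.ne'
  have hss : s * s = q := by
    rw [hs, ← Real.rpow_add hq]; norm_num
  have hA : q ^ (lam + α₁) * q ^ N = 1 := by
    rw [hNlam, Real.rpow_neg hq.le, Real.rpow_natCast]
    exact inv_mul_cancel₀ (pow_ne_zero _ hq0)
  have key := main_poly hq hq1 (q ^ l₁ * t₁) (q ^ l₂ * t₂) (q ^ (lam + α₁))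
    (q ^ (lam + α₁ - h₁ + l₁)) (s / x) N hA _ (fun z => rfl)
  simp only [convC] at key
  beta_reduce
  have e1 : s / (q * x) = s / x / q := by field_simp
  have e2 : s / (x / q) = s / x * q := by field_simp
  rw [e1, e2, Real.mul_rpow hq.le hx.le, Real.div_rpow hx.le hq.le]
  generalize (∑ n ∈ Finset.range (N+1), (s / x / q) ^ n * _ * _) = G1 at *
  generalize (∑ n ∈ Finset.range (N+1), (s / x * q) ^ n * _ * _) = G2 at *
  generalize (∑ n ∈ Finset.range (N+1), (s / x) ^ n * _ * _) = G3 at *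
  have f1 : q ^ (l₁ - 1/2) = q ^ l₁ / s := by rw [Real.rpow_sub hq]
  have f2 : q ^ (l₂ - 1/2) = q ^ l₂ / s := by rw [Real.rpow_sub hq]
  have f3 : q ^ (-h₁ + l₁ + l₂ + 2 * lam - 1/2) =
      q ^ l₁ * q ^ l₂ * (q ^ lam) ^ 2 / (q ^ h₁ * s) := by
    rw [Real.rpow_sub hq, Real.rpow_add hq, Real.rpow_add hq, Real.rpow_add hq,
      Real.rpow_neg hq.le, two_mul, Real.rpow_add hq, ← hs]
    field_simp
  have f4 : q ^ (h₁ + 1/2) = q ^ h₁ * s := by rw [Real.rpow_add hq]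
  have f5 : q ^ (l₁ + l₂ + lam - 1/2) = q ^ l₁ * q ^ l₂ * q ^ lam / s := by
    rw [Real.rpow_sub hq, Real.rpow_add hq, Real.rpow_add hq]
  have f6 : q ^ (l₁ + l₂ + lam) = q ^ l₁ * q ^ l₂ * q ^ lam := by
    rw [Real.rpow_add hq, Real.rpow_add hq]
  have f7 : q ^ (lam + α₁ - h₁ + l₁) = q ^ lam * q ^ α₁ / q ^ h₁ * q ^ l₁ := by
    rw [Real.rpow_add hq, Real.rpow_sub hq, Real.rpow_add hq]
  rw [f7, Real.rpow_add hq] at key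
  rw [f1, f2, f3, f4, f5, f6, Real.rpow_neg hq.le, Real.rpow_neg hq.le, Real.rpow_neg hq.le,
    Real.rpow_neg hq.le]
  have n1 := (Real.rpow_pos_of_pos hq l₁).ne'
  have n2 := (Real.rpow_pos_of_pos hq l₂).ne'
  have n3 := (Real.rpow_pos_of_pos hq lam).ne'
  have n4 := (Real.rpow_pos_of_pos hq α₁).ne'
  have n5 := (Real.rpow_pos_of_pos hq h₁).ne'
  generalize x ^ (-α₁) = X at *
  clear hA f1 f2 f3 f4 f5 f6 f7 e1 e2 hNlam
  clear_value s
  generalize q ^ l₁ = p at *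
  generalize q ^ l₂ = r at *
  generalize q ^ lam = L at *
  generalize q ^ α₁ = u at *
  generalize q ^ h₁ = h at *
  clear hs
  subst hss
  rw [← mul_zero (X * u⁻¹ * x ^ 2), ← key]
  field_simp
  ring
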